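/- arXiv:1609.09796 — 3 statements merged into one kernel-verified Lean document; each statement's English description precedes it below -/
import Mathlib

section
/- Let q ≥ 1 and let D be a symmetric n×n Monge matrix with n ≥ 2q+1. Then the permutation σ that first traverses the odd cities in increasing order and then traverses the even cities in decreasing order (formally σ(i) = 2i−1 for 1 ≤ i ≤ ⌈n/2⌉ and σ(i) = 2(n−i+1) for ⌈n/2⌉ < i ≤ n) minimizes the q-stripe TSP objective: F_q(σ) ≤ F_q(π) for every permutation π of {1,…,n}. -/
/-- Cyclic shift: the city `p` steps after position `i` in the circular order on `Fin n`. -/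
def finShift {n : ℕ} (i : Fin n) (p : ℕ) : Fin n :=
  ⟨(i.val + p) % n, Nat.mod_lt _ i.pos⟩

/-- The `q`-stripe TSP objective: `∑_{p=1}^{q} ∑_{i=1}^{n} d(π(i), π(i+p))`,
indices taken cyclically modulo `n`. -/
noncomputable def stripeObj (q : ℕ) {n : ℕ} (D : Fin n → Fin n → ℝ)
    (π : Equiv.Perm (Fin n)) : ℝ :=
  ∑ p ∈ Finset.Icc 1 q, ∑ i : Fin n, D (π i) (π (finShift i p))

/-- `D` is a Monge matrix: `d(i,j) + d(r,s) ≤ d(i,s) + d(r,j)` for all `i < r`, `j < s`. -/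
def MongeMat {n : ℕ} (D : Fin n → Fin n → ℝ) : Prop :=
  ∀ i r j s : Fin n, i < r → j < s → D i j + D r s ≤ D i s + D r j


/-- Number of marked points among `x, x+1, …, x+d-1`. -/
def winCount {n : ℕ} (β : ZMod n → ℕ) (x : ZMod n) (d : ℕ) : ℕ :=
  ∑ e ∈ Finset.range d, β (x + (e : ZMod n))

theorem sum_zmod_shift {n : ℕ} [NeZero n] {M : Type*} [AddCommMonoid M] (f : ZMod n → M)
    (a : ZMod n) : ∑ x, f (x + a) = ∑ x, f x :=
  Equiv.sum_comp (Equiv.addRight a) f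

theorem sum_range_zmod {n : ℕ} [NeZero n] {M : Type*} [AddCommMonoid M] (f : ZMod n → M) :
    ∑ e ∈ Finset.range n, f (e : ZMod n) = ∑ x, f x := by
  refine Finset.sum_nbij' (fun e => (e : ZMod n)) (fun x => x.val) ?_ ?_ ?_ ?_ ?_
  · simp
  · intro x _; simpa using ZMod.val_lt x
  · intro e he; exact ZMod.val_cast_of_lt (by simpa using he)
  · intro x _; simp
  · simp

theorem winCount_succ {n : ℕ} (β : ZMod n → ℕ) (x : ZMod n) (d : ℕ) :
    winCount β x (d + 1) = winCount β x d + β (x + (d : ZMod n)) := by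
  simp [winCount, Finset.sum_range_succ]

theorem winCount_succ' {n : ℕ} (β : ZMod n → ℕ) (x : ZMod n) (d : ℕ) :
    winCount β x (d + 1) = winCount β (x + 1) d + β x := by
  simp only [winCount, Finset.sum_range_succ']
  simp only [Nat.cast_zero, add_zero]
  congr 1
  refine Finset.sum_congr rfl fun e _ => ?_
  congr 1
  push_cast; ring

theorem winCount_le {n : ℕ} (β : ZMod n → ℕ) (hβ : ∀ x, β x ≤ 1) (x : ZMod n) (d : ℕ) :
    winCount β x d ≤ d := by
  induction d with
  | zero => simp [winCount]
  | succ d ih => rw [winCount_succ]; have := hβ (x + d); omega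

theorem winCount_lip {n : ℕ} (β : ZMod n → ℕ) (hβ : ∀ x, β x ≤ 1) (x : ZMod n) (d a : ℕ) :
    winCount β x (d + a) ≤ winCount β x d + a := by
  induction a with
  | zero => simp
  | succ a ih =>
    rw [← add_assoc, winCount_succ]; have := hβ (x + (d + a : ℕ)); omega

theorem winCount_full {n : ℕ} [NeZero n] (β : ZMod n → ℕ) (x : ZMod n) :
    winCount β x n = ∑ y, β y := by
  unfold winCount
  rw [sum_range_zmod (fun e => β (x + e))]
  simp_rw [add_comm x]
  exact sum_zmod_shift β x

/-- A sequence with nonincreasing increments lies above its chord. -/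
theorem chord_bound (S N : ℕ → ℕ) (hS : ∀ d, S (d + 1) = S d + N d) (hN : Antitone N)
    (t : ℕ) (a : ℕ) (r s : ℕ) (h : a + t * (r + s) ≤ S (r + s)) (h0 : a ≤ S 0) :
    a + t * r ≤ S r := by
  by_cases hc : t ≤ N r
  · have : ∀ i ≤ r, a + t * i ≤ S i := by
      intro i
      induction i with
      | zero => simpa using h0
      | succ i ih =>
        intro hi
        have h1 := ih (by omega)
        have h2 := hN (show i ≤ r by omega)
        rw [hS, mul_add]; omega
    exact this r le_rfl
  · have : ∀ i, S (r + i) ≤ S r + t * i := by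
      intro i
      induction i with
      | zero => simp
      | succ i ih =>
        have h2 := hN (show r ≤ r + i by omega)
        rw [← add_assoc, hS, mul_add]; omega
    have := this s
    rw [mul_add] at h; omega

theorem pollard_interval {n : ℕ} [NeZero n] (β : ZMod n → ℕ) (hβ : ∀ x, β x ≤ 1)
    (l m t : ℕ) (hl : ∑ y, β y = l) (htl : t ≤ l) (htm : t ≤ m) (hmn : l + m ≤ n + t) :
    t * l + t * (m - t) ≤ ∑ x, min t (winCount β x m) := by
  set S : ℕ → ℕ := fun d => ∑ x, min t (winCount β x d) with hSdef
  set N : ℕ → ℕ := fun d => ∑ x : ZMod n, if winCount β x d < t then β (x + (d : ZMod n)) else 0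
    with hNdef
  have hS : ∀ d, S (d + 1) = S d + N d := by
    intro d
    simp only [hSdef, hNdef, ← Finset.sum_add_distrib]
    refine Finset.sum_congr rfl fun x _ => ?_
    rw [winCount_succ]; have := hβ (x + d)
    split_ifs <;> omega
  have hN : Antitone N := by
    refine antitone_nat_of_succ_le fun d => ?_
    simp only [hNdef]
    rw [← sum_zmod_shift (fun x : ZMod n =>
      if winCount β x d < t then β (x + (d : ZMod n)) else 0) 1]
    refine Finset.sum_le_sum fun x _ => ?_
    rw [winCount_succ']
    have e : x + ((d + 1 : ℕ) : ZMod n) = x + 1 + d := by push_cast; ring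
    rw [e]
    split_ifs <;> omega
  have hln : l ≤ n := by
    rw [← hl, ← winCount_full β 0]; exact winCount_le β hβ 0 n
  have hSt : S t = t * l := by
    have : ∀ x, min t (winCount β x t) = winCount β x t := fun x =>
      min_eq_right (winCount_le β hβ x t)
    simp only [hSdef, this]
    simp only [winCount]
    rw [Finset.sum_comm]
    simp [sum_zmod_shift, hl]
  have hSM : S (n - l + t) = t * n := by
    have : ∀ x, min t (winCount β x (n - l + t)) = t := fun x => by
      have h1 := winCount_lip β hβ x (n - l + t) (l - t)
      rw [show n - l + t + (l - t) = n by omega, winCount_full, hl] at h1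
      omega
    simp only [hSdef, this]
    simp [ZMod.card, mul_comm]
  have := chord_bound (fun d => S (t + d)) (fun d => N (t + d)) (fun d => hS (t + d))
    (fun a b hab => hN (by omega)) t (t * l) (m - t) (n - l - (m - t)) ?_ ?_
  · have e : t + (m - t) = m := by omega
    simpa only [e] using this
  · have e : t + (m - t + (n - l - (m - t))) = n - l + t := by omega
    have e2 : m - t + (n - l - (m - t)) = n - l := by omega
    simp only [e]
    rw [hSM, e2, ← mul_add]
    exact Nat.mul_le_mul_left _ (by omega)
  · simp [hSt]

/-- Upper bound for the number of incidences. -/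
theorem incidence_upper {n : ℕ} [NeZero n] (α β : ZMod n → ℕ) (hα : ∀ x, α x ≤ 1)
    (hβ : ∀ x, β x ≤ 1) (a : ZMod n)
    (k l m t : ℕ) (hk : ∑ y, α y = k) (hl : ∑ y, β y = l) (htl : t ≤ l) (htm : t ≤ m)
    (hmn : l + m ≤ n + t) :
    ∑ x, α (x + a) * winCount β x m ≤ t * k + (l - t) * (m - t) := by
  have h1 := pollard_interval β hβ l m t hl htl htm hmn
  have h2 : ∑ x, α (x + a) * winCount β x m + ∑ x, min t (winCount β x m)
      ≤ ∑ x, t * α (x + a) + ∑ x, winCount β x m := by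
    rw [← Finset.sum_add_distrib, ← Finset.sum_add_distrib]
    refine Finset.sum_le_sum fun x _ => ?_
    have := hα (x + a)
    interval_cases α (x + a) <;> omega
  have h3 : ∑ x, winCount β x m = m * l := by
    simp only [winCount]
    rw [Finset.sum_comm]
    simp [sum_zmod_shift, hl]
  rw [← Finset.mul_sum, sum_zmod_shift, hk, h3] at h2
  obtain ⟨u, rfl⟩ := Nat.exists_eq_add_of_le htl
  obtain ⟨v, rfl⟩ := Nat.exists_eq_add_of_le htm
  simp only [Nat.add_sub_cancel_left] at *
  nlinarith

/-- The number of incidences below thresholds. -/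
def inc {n : ℕ} [NeZero n] (q m : ℕ) (P : ZMod n → ℕ) (k l : ℕ) : ℕ :=
  ∑ x : ZMod n, (if P (x + (q : ZMod n)) < k then 1 else 0) *
    winCount (fun y => if P y < l then 1 else 0) x m

theorem sum_thr {n : ℕ} [NeZero n] (P : ZMod n → ℕ) (hP : ∀ x, P x < n)
    (hPi : Function.Injective P) (l : ℕ) (hl : l ≤ n) :
    ∑ y, (if P y < l then 1 else 0) = l := by
  have hs : Finset.univ.image P = Finset.range n := by
    apply Finset.eq_of_subset_of_card_le
    · intro z; simp only [Finset.mem_image, Finset.mem_univ, true_and, Finset.mem_range]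
      rintro ⟨x, rfl⟩; exact hP x
    · rw [Finset.card_image_of_injective _ hPi]; simp [ZMod.card]
  rw [← Finset.sum_image (f := fun z => if z < l then 1 else 0) (fun x _ y _ h => hPi h), hs,
    ← Finset.sum_filter]
  have : (Finset.range n).filter (fun z => z < l) = Finset.range l := by
    ext z; simp; omega
  simp [this]

theorem inc_upper {n : ℕ} [NeZero n] (q m : ℕ) (P : ZMod n → ℕ) (hP : ∀ x, P x < n)
    (hPi : Function.Injective P) (k l t : ℕ) (hk : k ≤ n) (hl : l ≤ n)
    (htl : t ≤ l) (htm : t ≤ m) (hmn : l + m ≤ n + t) :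
    inc q m P k l ≤ t * k + (l - t) * (m - t) :=
  incidence_upper (fun y => if P y < k then 1 else 0) (fun y => if P y < l then 1 else 0)
    (fun x => by split_ifs <;> omega) (fun x => by split_ifs <;> omega)
    q k l m t (sum_thr P hP hPi k hk) (sum_thr P hP hPi l hl) htl htm hmn

theorem inc_succ {n : ℕ} [NeZero n] (q m : ℕ) (P : ZMod n → ℕ) (k l : ℕ) (x₀ : ZMod n)
    (hx : P (x₀ + q) = k) :
    inc q m P k l + winCount (fun y => if P y < l then 1 else 0) x₀ m ≤ inc q m P (k + 1) l := by
  have h : winCount (fun y => if P y < l then 1 else 0) x₀ m ≤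
      ∑ x : ZMod n, (if P (x + (q : ZMod n)) = k then 1 else 0) *
        winCount (fun y => if P y < l then 1 else 0) x m := by
    refine le_trans ?_ (Finset.single_le_sum (fun _ _ => Nat.zero_le _) (Finset.mem_univ x₀))
    simp [hx]
  refine le_trans (Nat.add_le_add_left h _) (le_of_eq ?_)
  unfold inc
  rw [← Finset.sum_add_distrib]
  refine Finset.sum_congr rfl fun x _ => ?_
  rw [← add_mul]; congr 1
  split_ifs <;> omega

/-- Lower bound for the window counts of the Supnick labelling. -/
theorem window_lower {n : ℕ} [NeZero n] (q m l : ℕ) (hm : m = 2 * q + 1) 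
    (P : ZMod n → ℕ)
    (hb : ∀ z : ℤ, -(l : ℤ) ≤ 2 * z → 2 * z < l → P (z : ZMod n) < l)
    (j : ℕ) (z : ℤ) (hz : 2 * z = j ∨ 2 * z = -(j : ℤ) - 1) :
    min (min l m) ((l + m - j) / 2) ≤
      winCount (fun y => if P y < l then 1 else 0) ((z : ZMod n) - q) m := by
  set lo : ℕ := ((q : ℤ) - z - (l / 2 : ℕ)).toNat
  set hi : ℕ := min m (((q : ℤ) - z + ((l + 1) / 2 : ℕ)).toNat)
  have h1 : (Finset.Ico lo hi).card ≤
      winCount (fun y => if P y < l then 1 else 0) ((z : ZMod n) - q) m := by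
    unfold winCount
    rw [← Finset.sum_filter, Finset.sum_const, smul_eq_mul, mul_one]
    refine Finset.card_le_card fun d hd => ?_
    rw [Finset.mem_Ico] at hd
    rw [Finset.mem_filter, Finset.mem_range]
    refine ⟨by omega, ?_⟩
    have := hb (z - q + d) (by omega) (by omega)
    simpa using this
  rw [Nat.card_Ico] at h1
  refine le_trans ?_ h1
  omega

theorem inc_lower {n : ℕ} [NeZero n] (q m l : ℕ) (hm : m = 2 * q + 1) (hmn : m ≤ n) (hl : l ≤ n)
    (P : ZMod n → ℕ) (hP : ∀ x, P x < n) (hPi : Function.Injective P)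
    (hb : ∀ z : ℤ, -(l : ℤ) ≤ 2 * z → 2 * z < l → P (z : ZMod n) < l)
    (hpos : ∀ j < n, ∃ z : ℤ, (2 * z = j ∨ 2 * z = -(j : ℤ) - 1) ∧ P (z : ZMod n) = j)
    (k : ℕ) (hk : k ≤ n) :
    ∃ t, t = max (l + m - n) (min (min l m) ((l + m - k) / 2)) ∧ 
      t * k + (l - t) * (m - t) ≤ inc q m P k l := by
  refine ⟨_, rfl, ?_⟩
  induction k with
  | zero =>
    have : l - max (l + m - n) (min (min l m) ((l + m - 0) / 2)) = 0 ∨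
      m - max (l + m - n) (min (min l m) ((l + m - 0) / 2)) = 0 := by omega
    rcases this with h | h <;> rw [h] <;> simp
  | succ k ih =>
    have ih := ih (by omega)
    obtain ⟨z, hz, hPz⟩ := hpos k (by omega)
    have h1 := window_lower q m l hm P hb k z hz
    have h2 : l + m - n ≤ winCount (fun y => if P y < l then 1 else 0) ((z : ZMod n) - q) m := by
      have := winCount_lip (fun y => if P y < l then 1 else 0)
        (fun x => by split_ifs <;> omega) ((z : ZMod n) - q) m (n - m)
      rw [show m + (n - m) = n by omega, winCount_full, sum_thr P hP hPi l hl] at this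
      omega
    have h3 := inc_succ q m P k l ((z : ZMod n) - q) (by simpa using hPz)
    generalize winCount (fun y => if P y < l then 1 else 0) ((z : ZMod n) - q) m = w at *
    generalize inc q m P k l = e at *
    generalize inc q m P (k + 1) l = e' at *
    have h4 := max_le h2 h1
    have h5 : max (l + m - n) (min (min l m) ((l + m - k) / 2)) ≤ min l m := by omega
    have h6 : max (l + m - n) (min (min l m) ((l + m - (k + 1)) / 2)) =
        max (l + m - n) (min (min l m) ((l + m - k) / 2)) ∨
      (max (l + m - n) (min (min l m) ((l + m - (k + 1)) / 2)) + 1 =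
        max (l + m - n) (min (min l m) ((l + m - k) / 2)) ∧
        l + m = k + 2 * max (l + m - n) (min (min l m) ((l + m - k) / 2))) := by omega
    generalize max (l + m - n) (min (min l m) ((l + m - k) / 2)) = t at *
    generalize max (l + m - n) (min (min l m) ((l + m - (k + 1)) / 2)) = t' at *
    obtain ⟨u, hu⟩ := Nat.exists_eq_add_of_le (show t ≤ l by omega)
    obtain ⟨v, hv⟩ := Nat.exists_eq_add_of_le (show t ≤ m by omega)
    rcases h6 with rfl | ⟨rfl, h7⟩
    · nlinarith
    · have e1 : l - t' = u + 1 := by omega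
      have e2 : m - t' = v + 1 := by omega
      have e3 : l - (t' + 1) = u := by omega
      have e4 : m - (t' + 1) = v := by omega
      have e5 : u + v = k := by omega
      rw [e3, e4] at ih
      rw [e1, e2]
      nlinarith

theorem inc_opt {n : ℕ} [NeZero n] (q m : ℕ) (hm : m = 2 * q + 1) (hmn : m ≤ n)
    (P : ZMod n → ℕ) (hP : ∀ x, P x < n) (hPi : Function.Injective P)
    (hb : ∀ l : ℕ, l ≤ n → ∀ z : ℤ, -(l : ℤ) ≤ 2 * z → 2 * z < l → P (z : ZMod n) < l)
    (hpos : ∀ j < n, ∃ z : ℤ, (2 * z = j ∨ 2 * z = -(j : ℤ) - 1) ∧ P (z : ZMod n) = j)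
    (Q : ZMod n → ℕ) (hQ : ∀ x, Q x < n) (hQi : Function.Injective Q)
    (k l : ℕ) (hk : k ≤ n) (hl : l ≤ n) : inc q m Q k l ≤ inc q m P k l := by
  obtain ⟨t, ht, h⟩ := inc_lower q m l hm hmn hl P hP hPi (hb l hl) hpos k hk
  exact (inc_upper q m Q hQ hQi k l t hk hl (by omega) (by omega) (by omega)).trans h

theorem sum_labels {n : ℕ} [NeZero n] (P : ZMod n → ℕ) (hP : ∀ x, P x < n)
    (hPi : Function.Injective P) (u : ℕ → ℝ) :
    ∑ y, u (P y) = ∑ j ∈ Finset.range n, u j := by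
  have hs : Finset.univ.image P = Finset.range n := by
    apply Finset.eq_of_subset_of_card_le
    · intro z; simp only [Finset.mem_image, Finset.mem_univ, true_and, Finset.mem_range]
      rintro ⟨x, rfl⟩; exact hP x
    · rw [Finset.card_image_of_injective _ hPi]; simp [ZMod.card]
  rw [← hs, Finset.sum_image (fun x _ y _ h => hPi h)]

/-- The Monge density. -/
def dens (E : ℕ → ℕ → ℝ) (k l : ℕ) : ℝ := E k (l + 1) + E (k + 1) l - E k l - E (k + 1) (l + 1)

theorem tele_thr (u : ℕ → ℝ) (N a : ℕ) (ha : a ≤ N) :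
    ∑ k ∈ Finset.range N, (if a < k + 1 then (1 : ℝ) else 0) * (u k - u (k + 1)) = u a - u N := by
  induction N, ha using Nat.le_induction with
  | base =>
    rw [sub_self]
    refine Finset.sum_eq_zero fun k hk => ?_
    rw [Finset.mem_range] at hk
    rw [if_neg (by omega), zero_mul]
  | succ N h ih =>
    rw [Finset.sum_range_succ, ih, if_pos (by omega)]; ring

theorem decomp (E : ℕ → ℕ → ℝ) (N a b : ℕ) (ha : a ≤ N) (hb : b ≤ N) :
    E a b = E a N + E N b - E N N - ∑ k ∈ Finset.range N, ∑ l ∈ Finset.range N,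
      dens E k l * ((if a < k + 1 then (1 : ℝ) else 0) * (if b < l + 1 then (1 : ℝ) else 0)) := by
  have h1 : ∀ k, ∑ l ∈ Finset.range N,
      dens E k l * ((if a < k + 1 then (1 : ℝ) else 0) * (if b < l + 1 then (1 : ℝ) else 0)) =
      (if a < k + 1 then (1 : ℝ) else 0) *
        ((E (k + 1) b - E (k + 1) N - E k b + E k N)) := by
    intro k
    have := tele_thr (fun l => E (k + 1) l - E k l) N b hb
    rw [show E (k + 1) b - E (k + 1) N - E k b + E k N =
      E (k + 1) b - E k b - (E (k + 1) N - E k N) by ring, ← this, Finset.mul_sum]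
    refine Finset.sum_congr rfl fun l _ => ?_
    unfold dens; ring
  simp only [h1]
  have := tele_thr (fun k => E k N - E k b) N a ha
  have h2 : ∑ k ∈ Finset.range N, (if a < k + 1 then (1 : ℝ) else 0) *
        ((E (k + 1) b - E (k + 1) N - E k b + E k N)) = E a N - E a b - (E N N - E N b) := by
    rw [← this]
    refine Finset.sum_congr rfl fun l _ => ?_
    ring
  rw [h2]; ring

/-- The symmetrised objective with the diagonal included. -/
noncomputable def fullObj {n : ℕ} [NeZero n] (q m : ℕ) (E : ℕ → ℕ → ℝ) (P : ZMod n → ℕ) : ℝ :=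
  ∑ d ∈ Finset.range m, ∑ x : ZMod n, E (P (x + (q : ZMod n))) (P (x + (d : ZMod n)))

theorem fullObj_eq {n : ℕ} [NeZero n] (q m N : ℕ) (hN : n = N + 1) (E : ℕ → ℕ → ℝ)
    (P : ZMod n → ℕ) (hP : ∀ x, P x < n) (hPi : Function.Injective P) :
    fullObj q m E P = m * (∑ j ∈ Finset.range n, E j N + ∑ j ∈ Finset.range n, E N j - n * E N N)
      - ∑ k ∈ Finset.range N, ∑ l ∈ Finset.range N, dens E k l * inc q m P (k + 1) (l + 1) := by
  have hle : ∀ x, P x ≤ N := fun x => by have := hP x; omega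
  unfold fullObj
  have h1 : ∀ d ∈ Finset.range m,
      ∑ x : ZMod n, E (P (x + (q : ZMod n))) (P (x + (d : ZMod n))) =
      (∑ j ∈ Finset.range n, E j N + ∑ j ∈ Finset.range n, E N j - n * E N N) -
      ∑ k ∈ Finset.range N, ∑ l ∈ Finset.range N, dens E k l * ∑ x : ZMod n,
        ((if P (x + (q : ZMod n)) < k + 1 then (1 : ℝ) else 0) *
          (if P (x + (d : ZMod n)) < l + 1 then (1 : ℝ) else 0)) := by
    intro d _
    rw [Finset.sum_congr rfl fun x _ => decomp E N _ _ (hle (x + (q : ZMod n))) (hle (x + (d : ZMod n)))]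
    rw [Finset.sum_sub_distrib, Finset.sum_sub_distrib, Finset.sum_add_distrib,
      sum_zmod_shift (fun x => E (P x) N) (q : ZMod n),
      sum_zmod_shift (fun x => E N (P x)) (d : ZMod n),
      sum_labels P hP hPi (fun j => E j N), sum_labels P hP hPi (fun j => E N j)]
    congr 1
    · simp [ZMod.card]
    · rw [Finset.sum_comm]
      refine Finset.sum_congr rfl fun k _ => ?_
      rw [Finset.sum_comm]
      refine Finset.sum_congr rfl fun l _ => ?_
      rw [Finset.mul_sum]
  rw [Finset.sum_congr rfl h1, Finset.sum_sub_distrib]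
  congr 1
  · simp; ring
  · rw [Finset.sum_comm]
    refine Finset.sum_congr rfl fun k _ => ?_
    rw [Finset.sum_comm]
    refine Finset.sum_congr rfl fun l _ => ?_
    rw [← Finset.mul_sum, Finset.sum_comm]
    congr 1
    unfold inc winCount
    push_cast
    refine Finset.sum_congr rfl fun x _ => ?_
    rw [Finset.mul_sum]

theorem fullObj_mono {n : ℕ} [NeZero n] (q m N : ℕ) (hN : n = N + 1) (E : ℕ → ℕ → ℝ)
    (hE : ∀ k < N, ∀ l < N, 0 ≤ dens E k l)
    (P : ZMod n → ℕ) (hP : ∀ x, P x < n) (hPi : Function.Injective P)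
    (Q : ZMod n → ℕ) (hQ : ∀ x, Q x < n) (hQi : Function.Injective Q)
    (h : ∀ k l, k ≤ n → l ≤ n → inc q m Q k l ≤ inc q m P k l) :
    fullObj q m E P ≤ fullObj q m E Q := by
  rw [fullObj_eq q m N hN E P hP hPi, fullObj_eq q m N hN E Q hQ hQi]
  refine sub_le_sub_left (Finset.sum_le_sum fun k hk => Finset.sum_le_sum fun l hl => ?_) _
  rw [Finset.mem_range] at hk hl
  exact mul_le_mul_of_nonneg_left (by exact_mod_cast h _ _ (by omega) (by omega)) (hE k hk l hl)

theorem fullObj_two {n : ℕ} [NeZero n] (q : ℕ) (E : ℕ → ℕ → ℝ) (hE : ∀ a b, E a b = E b a)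
    (P : ZMod n → ℕ) (hP : ∀ x, P x < n) (hPi : Function.Injective P) :
    fullObj q (2 * q + 1) E P =
      2 * ∑ p ∈ Finset.Icc 1 q, ∑ x : ZMod n, E (P x) (P (x + (p : ZMod n))) +
        ∑ j ∈ Finset.range n, E j j := by
  have h0 : ∑ p ∈ Finset.Icc 1 q, ∑ x : ZMod n, E (P x) (P (x + (p : ZMod n))) =
      ∑ j ∈ Finset.range q, ∑ x : ZMod n, E (P x) (P (x + ((j + 1 : ℕ) : ZMod n))) := by
    rw [Finset.range_eq_Ico, Finset.sum_Ico_add' (fun p : ℕ => ∑ x : ZMod n, E (P x) (P (x + (p : ZMod n)))) 0 q 1]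
    rfl
  unfold fullObj
  rw [show 2 * q + 1 = q + (1 + q) by ring, Finset.sum_range_add, Finset.sum_range_add,
    ← Finset.sum_range_reflect, h0, two_mul]
  have h1 : ∀ j ∈ Finset.range q,
      ∑ x : ZMod n, E (P (x + (q : ZMod n))) (P (x + ((q - 1 - j : ℕ) : ZMod n))) =
      ∑ x : ZMod n, E (P x) (P (x + ((j + 1 : ℕ) : ZMod n))) := by
    intro j hj
    rw [Finset.mem_range] at hj
    rw [← sum_zmod_shift (fun x => E (P x) (P (x + ((j + 1 : ℕ) : ZMod n)))) ((q - 1 - j : ℕ) : ZMod n)]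
    refine Finset.sum_congr rfl fun x _ => ?_
    rw [hE, add_assoc x, ← Nat.cast_add, show q - 1 - j + (j + 1) = q by omega]
  have h2 : ∀ j ∈ Finset.range q,
      ∑ x : ZMod n, E (P (x + (q : ZMod n))) (P (x + ((q + (1 + j) : ℕ) : ZMod n))) =
      ∑ x : ZMod n, E (P x) (P (x + ((j + 1 : ℕ) : ZMod n))) := by
    intro j hj
    rw [← sum_zmod_shift (fun x => E (P x) (P (x + ((j + 1 : ℕ) : ZMod n)))) (q : ZMod n)]
    refine Finset.sum_congr rfl fun x _ => ?_
    rw [add_assoc x, ← Nat.cast_add, show q + (1 + j) = q + (j + 1) by omega]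
  have h3 : ∑ x : ZMod n, E (P (x + (q : ZMod n))) (P (x + (q : ZMod n))) =
      ∑ j ∈ Finset.range n, E j j := by
    rw [sum_zmod_shift (fun x => E (P x) (P x)) (q : ZMod n), sum_labels P hP hPi (fun j => E j j)]
  rw [Finset.sum_congr rfl h1, Finset.sum_congr rfl h2]
  simp only [Finset.sum_range_one, add_zero, h3]
  ring

/-- The labelling of positions in `ZMod n` by a permutation. -/
def lab {n : ℕ} [NeZero n] (π : Equiv.Perm (Fin n)) (x : ZMod n) : ℕ :=
  (π ⟨x.val, ZMod.val_lt x⟩).val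

theorem lab_lt {n : ℕ} [NeZero n] (π : Equiv.Perm (Fin n)) (x : ZMod n) : lab π x < n :=
  (π ⟨x.val, ZMod.val_lt x⟩).isLt

theorem lab_inj {n : ℕ} [NeZero n] (π : Equiv.Perm (Fin n)) : Function.Injective (lab π) := by
  intro x y h
  have := π.injective (Fin.ext h)
  exact ZMod.val_injective n (by simpa using this)

theorem stripeObj_eq {n : ℕ} [NeZero n] (q : ℕ) (D : Fin n → Fin n → ℝ) (E : ℕ → ℕ → ℝ)
    (hE : ∀ i j : Fin n, E i.val j.val = D i j) (π : Equiv.Perm (Fin n)) :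
    stripeObj q D π =
      ∑ p ∈ Finset.Icc 1 q, ∑ x : ZMod n, E (lab π x) (lab π (x + (p : ZMod n))) := by
  unfold stripeObj
  refine Finset.sum_congr rfl fun p _ => ?_
  refine Finset.sum_nbij' (fun i => (i.val : ZMod n)) (fun x => ⟨x.val, ZMod.val_lt x⟩) ?_ ?_ ?_ ?_ ?_
  · simp
  · simp
  · intro i _; apply Fin.ext; exact ZMod.val_cast_of_lt i.isLt
  · intro x _; simp
  · intro i _
    unfold lab
    rw [hE]
    congr 2
    · apply Fin.ext; exact (ZMod.val_cast_of_lt i.isLt).symm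
    · apply Fin.ext
      simp only [finShift]
      rw [← Nat.cast_add, ZMod.val_natCast]

theorem lab_nat {n : ℕ} [NeZero n] (σ : Equiv.Perm (Fin n))
    (hσ : ∀ i : Fin n, (σ i).val =
      if i.val < (n+1)/2 then 2*i.val else 2*(n-1-i.val)+1) (a : ℕ) (ha : 2 * a < n) :
    lab σ ((a : ℤ) : ZMod n) = 2 * a := by
  unfold lab
  rw [hσ]
  have : (((a : ℤ) : ZMod n)).val = a := by
    rw [Int.cast_natCast]; exact ZMod.val_cast_of_lt (by omega)
  simp only [this]
  rw [if_pos (by omega)]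

theorem lab_neg {n : ℕ} [NeZero n] (σ : Equiv.Perm (Fin n))
    (hσ : ∀ i : Fin n, (σ i).val =
      if i.val < (n+1)/2 then 2*i.val else 2*(n-1-i.val)+1) (a : ℕ) (ha : 2 * (a + 1) ≤ n) :
    lab σ ((-((a : ℤ) + 1) : ℤ) : ZMod n) = 2 * a + 1 := by
  unfold lab
  rw [hσ]
  have : (((-((a : ℤ) + 1) : ℤ) : ZMod n)).val = n - (a + 1) := by
    have h : ((-((a : ℤ) + 1) : ℤ) : ZMod n) = ((n - (a + 1) : ℕ) : ZMod n) := by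
      rw [Nat.cast_sub (by omega)]; simp
    rw [h]; exact ZMod.val_cast_of_lt (by omega)
  simp only [this]
  rw [if_neg (by omega)]
  omega

/-- Theorem (Burkard, Çela, Rote & Woeginger): for `q ≥ 1` and a symmetric `n×n`
Monge matrix with `n ≥ 2q+1`, the Supnick permutation `σ` (odd cities increasing,
then even cities decreasing; in 0-based terms `σ(i) = 2i` for `i < ⌈n/2⌉` and
`σ(i) = 2(n−1−i)+1` otherwise) minimizes the `q`-stripe TSP objective. -/
theorem qStripe_supnick_monge (q n : ℕ) (hq : 1 ≤ q) (hn : 2*q+1 ≤ n)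
    (D : Fin n → Fin n → ℝ) (hsymm : ∀ i j, D i j = D j i) (hM : MongeMat D)
    (σ : Equiv.Perm (Fin n))
    (hσ : ∀ i : Fin n, (σ i).val =
      if i.val < (n+1)/2 then 2*i.val else 2*(n-1-i.val)+1)
    (π : Equiv.Perm (Fin n)) :
    stripeObj q D σ ≤ stripeObj q D π := by
  have : NeZero n := ⟨by omega⟩
  obtain ⟨N, hN⟩ : ∃ N, n = N + 1 := ⟨n - 1, by omega⟩
  set E : ℕ → ℕ → ℝ := fun a b => D (Fin.ofNat n a) (Fin.ofNat n b) with hEdef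
  have hE : ∀ i j : Fin n, E i.val j.val = D i j := by
    intro i j
    simp [hEdef]
  have hEs : ∀ a b, E a b = E b a := fun a b => hsymm _ _
  have hd : ∀ k < N, ∀ l < N, 0 ≤ dens E k l := by
    intro k hk l hl
    have := hM (Fin.ofNat n k) (Fin.ofNat n (k + 1)) (Fin.ofNat n l) (Fin.ofNat n (l + 1))
      (by rw [Fin.lt_def]; simp only [Fin.val_ofNat]
          rw [Nat.mod_eq_of_lt (by omega), Nat.mod_eq_of_lt (by omega)]; omega)
      (by rw [Fin.lt_def]; simp only [Fin.val_ofNat]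
          rw [Nat.mod_eq_of_lt (by omega), Nat.mod_eq_of_lt (by omega)]; omega)
    simp only [dens, hEdef]
    linarith
  have hb : ∀ l : ℕ, l ≤ n → ∀ z : ℤ, -(l : ℤ) ≤ 2 * z → 2 * z < l →
      lab σ (z : ZMod n) < l := by
    intro l hl z h1 h2
    rcases le_or_gt 0 z with hz | hz
    · obtain ⟨a, rfl⟩ := Int.eq_ofNat_of_zero_le hz
      rw [lab_nat σ hσ a (by omega)]; omega
    · obtain ⟨a, ha⟩ := Int.eq_ofNat_of_zero_le (show 0 ≤ -z - 1 by omega)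
      obtain rfl : z = -((a : ℤ) + 1) := by omega
      rw [lab_neg σ hσ a (by omega)]; omega
  have hpos : ∀ j < n, ∃ z : ℤ, (2 * z = j ∨ 2 * z = -(j : ℤ) - 1) ∧
      lab σ (z : ZMod n) = j := by
    intro j hj
    rcases Nat.even_or_odd' j with ⟨a, rfl | rfl⟩
    · exact ⟨a, Or.inl (by push_cast; ring), lab_nat σ hσ a hj⟩
    · exact ⟨-((a : ℤ) + 1), Or.inr (by push_cast; ring), lab_neg σ hσ a (by omega)⟩
  have key := fullObj_mono q (2 * q + 1) N hN E hd (lab σ) (lab_lt σ) (lab_inj σ)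
    (lab π) (lab_lt π) (lab_inj π)
    (fun k l hk hl => inc_opt q (2 * q + 1) rfl hn (lab σ) (lab_lt σ) (lab_inj σ) hb hpos
      (lab π) (lab_lt π) (lab_inj π) k l hk hl)
  rw [fullObj_two q E hEs _ (lab_lt σ) (lab_inj σ), fullObj_two q E hEs _ (lab_lt π) (lab_inj π),
    ← stripeObj_eq q D E hE σ, ← stripeObj_eq q D E hE π] at key
  linarith
end

section
/- (Kalmanson) Let D be a symmetric n×n Kalmanson matrix with n ≥ 3. Then the identity permutation ⟨1,2,…,n⟩ is an optimal TSP tour: Σ_{i=1}^{n} d(i,i+1) ≤ Σ_{i=1}^{n} d(π(i),π(i+1)) for every permutation π of {1,…,n}, where indices are taken cyclically modulo n. -/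
/-- The TSP tour length `∑_{i=1}^{n} d(π(i), π(i+1))`, indices cyclically modulo `n`. -/
noncomputable def tourLen {n : ℕ} (D : Fin n → Fin n → ℝ) (π : Equiv.Perm (Fin n)) : ℝ :=
  ∑ i : Fin n, D (π i) (π (finShift i 1))

/-- `D` is a Kalmanson matrix: `d(i,j) + d(k,ℓ) ≤ d(i,k) + d(j,ℓ)` and
`d(i,ℓ) + d(j,k) ≤ d(i,k) + d(j,ℓ)` for all `i < j < k < ℓ`. -/
def KalmansonMat {n : ℕ} (D : Fin n → Fin n → ℝ) : Prop :=
  ∀ i j k l : Fin n, i < j → j < k → k < l →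
    D i j + D k l ≤ D i k + D j l ∧ D i l + D j k ≤ D i k + D j l

/-- Length of the closed tour through the cities in a list. -/
noncomputable def cycLen (D : ℕ → ℕ → ℝ) (l : List ℕ) : ℝ :=
  (List.zipWith D l (l.rotate 1)).sum

theorem cycLen_rotate (D : ℕ → ℕ → ℝ) (l : List ℕ) (k : ℕ) :
    cycLen D (l.rotate k) = cycLen D l := by
  unfold cycLen
  rw [List.rotate_rotate, add_comm k 1, ← List.rotate_rotate,
    ← List.zipWith_rotate_distrib D l (l.rotate 1) k (by simp)]
  exact (List.rotate_perm _ _).sum_eq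

theorem cycLen_append (D : ℕ → ℕ → ℝ) (s t : List ℕ) :
    cycLen D (s ++ t) = cycLen D (t ++ s) := by
  rw [← List.rotate_append_length_eq s t, cycLen_rotate]

theorem zip_snoc (D : ℕ → ℕ → ℝ) (b a c : ℕ) (mid : List ℕ) :
    (List.zipWith D (b :: (mid ++ [a])) (mid ++ [a] ++ [c])).sum =
      (List.zipWith D (b :: mid) (mid ++ [a])).sum + D a c := by
  rw [← List.cons_append, List.zipWith_append (by simp)]
  simp

theorem cycLen_cons (D : ℕ → ℕ → ℝ) (m b a : ℕ) (mid : List ℕ) :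
    cycLen D (m :: b :: (mid ++ [a])) =
      cycLen D (b :: (mid ++ [a])) - D a b + D m b + D a m := by
  have h1 := zip_snoc D b a b mid
  have h2 := zip_snoc D b a m mid
  unfold cycLen
  rw [List.rotate_cons_succ, List.rotate_cons_succ, List.rotate_zero, List.rotate_zero,
    List.cons_append, List.zipWith_cons_cons, List.sum_cons, h1, h2]
  ring

theorem cyc_opt (N : ℕ) (D : ℕ → ℕ → ℝ) (hs : ∀ i j, D i j = D j i)
    (hK : ∀ i j k l, i < j → j < k → k < l → l < N →
      D i j + D k l ≤ D i k + D j l ∧ D i l + D j k ≤ D i k + D j l)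
    (m : ℕ) (hm : 2 ≤ m) : m ≤ N → ∀ l : List ℕ, l.Perm (List.range m) →
      cycLen D (List.range m) ≤ cycLen D l := by
  have red : ∀ (m : ℕ) (l : List ℕ), l.Perm (List.range (m + 1)) →
      ∃ r : List ℕ, r.Perm (List.range m) ∧ cycLen D l = cycLen D (m :: r) := by
    intro m l hl
    obtain ⟨s, t, rfl⟩ := List.append_of_mem (hl.mem_iff.2 (List.mem_range.2 (Nat.lt_succ_self m)))
    refine ⟨t ++ s, ?_, ?_⟩
    · rw [List.range_succ] at hl
      have h2 : (m :: (t ++ s)).Perm (m :: List.range m) :=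
        ((List.perm_append_comm (l₁ := m :: t) (l₂ := s)).trans hl).trans
          (List.perm_append_comm (l₁ := List.range m) (l₂ := [m]))
      exact h2.cons_inv
    · rw [cycLen_append]; rfl
  induction m, hm using Nat.le_induction with
  | base =>
    intro _ l hl
    obtain ⟨r, hr, e⟩ := red 1 l hl
    have : r = [0] := by simpa using hr
    subst this
    rw [e]
    apply le_of_eq
    simp [cycLen, List.range_succ, add_comm]
  | succ m hm ih =>
    intro hN l hl
    obtain ⟨r, hr, e⟩ := red m l hl
    have ihr := ih (by omega) r hr
    have e0 : cycLen D (List.range (m + 1)) = cycLen D (m :: List.range m) := by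
      rw [List.range_succ, cycLen_append]; rfl
    rw [e, e0]
    obtain ⟨p, rfl⟩ : ∃ p, m = p + 2 := ⟨m - 2, by omega⟩
    have e1 : List.range (p + 2) = 0 :: ((List.range p).map Nat.succ ++ [p + 1]) := by
      rw [List.range_succ, List.range_succ_eq_map]; rfl
    have hlen : r.length = p + 2 := by simpa using hr.length_eq
    obtain ⟨b, r', rfl⟩ : ∃ b r', r = b :: r' := by
      cases r with
      | nil => simp at hlen
      | cons b r' => exact ⟨b, r', rfl⟩
    obtain rfl | ⟨mid, a, rfl⟩ := List.eq_nil_or_concat' r'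
    · simp at hlen
    have hnd : (b :: (mid ++ [a])).Nodup := hr.nodup_iff.2 List.nodup_range
    have hb : b < p + 2 := List.mem_range.1 (hr.mem_iff.1 (by simp))
    have ha : a < p + 2 := List.mem_range.1 (hr.mem_iff.1 (by simp))
    have hab : a ≠ b := by
      rintro rfl
      simp at hnd
    have key : ∀ a b, a < b → b < p + 2 → D 0 (p+2) + D a b + D (p+1) (p+2) ≤
        D a (p+2) + D 0 (p+1) + D b (p+2) := by
      intro a b hab hb
      have k1 : D 0 (p+2) + D a (p+1) ≤ D 0 (p+1) + D a (p+2) := by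
        rcases Nat.eq_zero_or_pos a with rfl | h
        · linarith
        · exact (hK 0 a (p+1) (p+2) h (by omega) (by omega) (by omega)).2
      have k2 : D a b + D (p+1) (p+2) ≤ D a (p+1) + D b (p+2) := by
        rcases eq_or_ne b (p+1) with rfl | h
        · exact le_rfl
        · exact (hK a b (p+1) (p+2) hab (by omega) (by omega) (by omega)).1
      linarith
    rw [cycLen_cons, e1, cycLen_cons, ← e1]
    have s1 := hs (p+2) 0
    have s2 := hs (p+1) 0
    have s3 := hs (p+2) b
    have s4 := hs a b
    rcases lt_or_gt_of_ne hab with h | h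
    · have := key a b h hb
      linarith
    · have := key b a h ha
      linarith

theorem tourLen_eq (n : ℕ) (D : Fin n → Fin n → ℝ) (D' : ℕ → ℕ → ℝ)
    (h : ∀ i j : Fin n, D' i j = D i j) (π : Equiv.Perm (Fin n)) :
    tourLen D π = cycLen D' (List.ofFn fun i => (π i : ℕ)) := by
  have e : List.zipWith D' (List.ofFn fun i => (π i : ℕ))
      ((List.ofFn fun i => (π i : ℕ)).rotate 1) =
      List.ofFn fun i => D (π i) (π (finShift i 1)) := by
    apply List.ext_getElem
    · simp
    · intro i h1 h2
      simp [List.getElem_rotate, finShift, h]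
  rw [cycLen, e, List.sum_ofFn, tourLen]

/-- Theorem (Kalmanson): for a symmetric `n×n` Kalmanson matrix with `n ≥ 3`, the
identity permutation is an optimal TSP tour. -/
theorem kalmanson_tsp_identity_optimal (n : ℕ) (hn : 3 ≤ n)
    (D : Fin n → Fin n → ℝ) (hsymm : ∀ i j, D i j = D j i) (hK : KalmansonMat D)
    (π : Equiv.Perm (Fin n)) :
    tourLen D (Equiv.refl (Fin n)) ≤ tourLen D π := by
  have hn0 : 0 < n := by omega
  let f : ℕ → Fin n := fun i => ⟨i % n, Nat.mod_lt _ hn0⟩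
  have hf : ∀ i : Fin n, f i = i := fun i => Fin.ext (Nat.mod_eq_of_lt i.2)
  have hfl : ∀ i j, i < j → j < n → f i < f j := by
    intro i j hij hj
    change i % n < j % n
    rwa [Nat.mod_eq_of_lt hj, Nat.mod_eq_of_lt (hij.trans hj)]
  have hD : ∀ i j : Fin n, (fun i j : ℕ => D (f i) (f j)) i j = D i j := by
    intro i j
    simp only [hf]
  rw [tourLen_eq n D (fun i j : ℕ => D (f i) (f j)) hD,
    tourLen_eq n D (fun i j : ℕ => D (f i) (f j)) hD]
  have e : (List.ofFn fun i : Fin n => ((Equiv.refl (Fin n)) i : ℕ)) = List.range n := by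
    apply List.ext_getElem <;> simp
  rw [e]
  refine cyc_opt n _ (fun i j => hsymm _ _) ?_ n (by omega) le_rfl _ ?_
  · intro i j k l h1 h2 h3 h4
    exact hK _ _ _ _ (hfl _ _ h1 (by omega)) (hfl _ _ h2 (by omega)) (hfl _ _ h3 h4)
  · rw [← e]
    exact Equiv.Perm.ofFn_comp_perm π (fun i : Fin n => (i : ℕ))
end

section
/- Let q ≥ 1 and let D be a symmetric n×n Kalmanson matrix with n ≥ 2q+1. Then the identity permutation ⟨1,2,…,n⟩ minimizes the q-stripe TSP objective: F_q(id) ≤ F_q(π) for every permutation π of {1,…,n}. -/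
/-- forward cyclic distance -/
def fdist {n : ℕ} (x y : Fin n) : ℕ :=
  if x.val ≤ y.val then y.val - x.val else y.val + n - x.val

/-- ordered pairs inside `S` at forward distance between `1` and `q` -/
def innerPairs (q : ℕ) {n : ℕ} (S : Finset (Fin n)) : Finset (Fin n × Fin n) :=
  (S ×ˢ S).filter (fun z => 1 ≤ fdist z.1 z.2 ∧ fdist z.1 z.2 ≤ q)

theorem finShift_val {n : ℕ} (x : Fin n) (p : ℕ) (hp : p < n) :
    (finShift x p).val = if x.val + p < n then x.val + p else x.val + p - n := by
  have hx := x.isLt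
  unfold finShift
  split_ifs with h
  · exact Nat.mod_eq_of_lt h
  · show (x.val + p) % n = _
    rw [Nat.mod_eq_sub_mod (by omega), Nat.mod_eq_of_lt (by omega)]

theorem fdist_finShift {n : ℕ} (x : Fin n) (p : ℕ) (hp : p < n) :
    fdist x (finShift x p) = p := by
  have hx := x.isLt
  unfold fdist
  rw [finShift_val x p hp]
  split_ifs <;> omega

theorem finShift_fdist {n : ℕ} (x y : Fin n) : finShift x (fdist x y) = y := by
  have hx := x.isLt
  have hy := y.isLt
  have h : fdist x y < n := by unfold fdist; split_ifs <;> omega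
  apply Fin.ext
  rw [finShift_val x _ h]
  unfold fdist
  split_ifs <;> omega

theorem finShift_inj {n : ℕ} (p : ℕ) (hp : p < n) :
    Function.Injective (fun x : Fin n => finShift x p) := by
  intro x y h
  have h' := congrArg Fin.val h
  have hx := x.isLt
  have hy := y.isLt
  simp only [finShift_val _ p hp] at h'
  apply Fin.ext
  split_ifs at h' <;> omega

theorem finShift_bij {n : ℕ} (p : ℕ) (hp : p < n) :
    Function.Bijective (fun x : Fin n => finShift x p) :=
  Finite.injective_iff_bijective.mp (finShift_inj p hp)

theorem inner_card (q : ℕ) {n : ℕ} (hq : q < n) (S : Finset (Fin n)) :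
    (innerPairs q S).card
      = ∑ p ∈ Finset.Icc 1 q, (S.filter (fun x => finShift x p ∈ S)).card := by
  rw [← Finset.card_sigma]
  symm
  refine Finset.card_bij' (fun z _ => (z.2, finShift z.2 z.1))
    (fun z _ => ⟨fdist z.1 z.2, z.1⟩) ?_ ?_ ?_ ?_
  · rintro ⟨p, x⟩ h
    simp only [Finset.mem_sigma, Finset.mem_Icc, Finset.mem_filter] at h
    simp only [innerPairs, Finset.mem_filter, Finset.mem_product]
    rw [fdist_finShift x p (by omega)]
    exact ⟨h.2, h.1⟩
  · rintro ⟨x, y⟩ h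
    simp only [innerPairs, Finset.mem_filter, Finset.mem_product] at h
    simp only [Finset.mem_sigma, Finset.mem_Icc, Finset.mem_filter, finShift_fdist]
    exact ⟨h.2, h.1⟩
  · rintro ⟨p, x⟩ h
    simp only [Finset.mem_sigma, Finset.mem_Icc, Finset.mem_filter] at h
    simp only [fdist_finShift x p (by omega)]
  · rintro ⟨x, y⟩ h
    simp only [finShift_fdist]

theorem inner_small (q : ℕ) {n : ℕ} (hn : 2 * q + 1 ≤ n) (S : Finset (Fin n)) :
    2 * (innerPairs q S).card + S.card ≤ S.card * S.card := by
  have h1 : ((innerPairs q S).image Prod.swap).card = (innerPairs q S).card :=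
    Finset.card_image_of_injective _ Prod.swap_injective
  have hd : Disjoint (innerPairs q S) ((innerPairs q S).image Prod.swap) := by
    rw [Finset.disjoint_left]
    rintro ⟨x, y⟩ h h'
    simp only [Finset.mem_image, Prod.exists, Prod.swap_prod_mk, Prod.mk.injEq] at h'
    obtain ⟨a, b, h', rfl, rfl⟩ := h'
    simp only [innerPairs, Finset.mem_filter] at h h'
    simp only [fdist] at h h'
    have := a.isLt
    have := b.isLt
    split_ifs at h h' <;> omega
  have hsub : (innerPairs q S) ∪ ((innerPairs q S).image Prod.swap) ⊆ S.offDiag := by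
    rintro ⟨x, y⟩ h
    simp only [Finset.mem_union, Finset.mem_image, Prod.exists, Prod.swap_prod_mk,
      Prod.mk.injEq] at h
    rw [Finset.mem_offDiag]
    rcases h with h | ⟨a, b, h, rfl, rfl⟩
    · simp only [innerPairs, Finset.mem_filter, Finset.mem_product] at h
      refine ⟨h.1.1, h.1.2, ?_⟩
      intro hxy
      simp only at hxy
      rw [hxy] at h
      simp [fdist] at h
    · simp only [innerPairs, Finset.mem_filter, Finset.mem_product] at h
      refine ⟨h.1.2, h.1.1, ?_⟩
      intro hxy
      simp only at hxy
      rw [hxy] at h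
      simp [fdist] at h
  have h2 := Finset.card_le_card hsub
  rw [Finset.card_union_of_disjoint hd, h1, Finset.offDiag_card] at h2
  have := Nat.le_mul_self S.card
  omega

theorem shift_preimage_card {n : ℕ} (p : ℕ) (hp : p < n) (S : Finset (Fin n)) :
    (Finset.univ.filter (fun x => finShift x p ∈ S)).card = S.card := by
  have := Finset.card_bijective (s := Finset.univ.filter (fun x => finShift x p ∈ S)) (t := S)
    (fun x : Fin n => finShift x p) (finShift_bij p hp) (by simp)
  exact this

theorem inner_compl (q : ℕ) {n : ℕ} (hq : q < n) (S : Finset (Fin n)) :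
    (innerPairs q S).card + q * Sᶜ.card = (innerPairs q Sᶜ).card + q * S.card := by
  rw [inner_card q hq, inner_card q hq]
  have key : ∀ p ∈ Finset.Icc 1 q, (S.filter (fun x => finShift x p ∈ S)).card + Sᶜ.card
      = (Sᶜ.filter (fun x => finShift x p ∈ Sᶜ)).card + S.card := by
    intro p hp
    rw [Finset.mem_Icc] at hp
    have a1 := Finset.card_filter_add_card_filter_not (s := Sᶜ) (fun x => finShift x p ∈ S)
    have a2 := shift_preimage_card p (by omega) S
    have a3 : (Finset.univ.filter (fun x => finShift x p ∈ S)).card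
        = (S.filter (fun x => finShift x p ∈ S)).card
          + (Sᶜ.filter (fun x => finShift x p ∈ S)).card := by
      rw [← Finset.card_union_of_disjoint, ← Finset.filter_union, Finset.union_compl]
      exact Finset.disjoint_filter_filter disjoint_compl_right
    simp only [Finset.mem_compl]
    omega
  have := Finset.sum_congr rfl key
  rw [Finset.sum_add_distrib, Finset.sum_add_distrib] at this
  simpa using this

theorem inner_contract (q : ℕ) {n u : ℕ} (φ : Fin u ↪o Fin n) (S : Finset (Fin n))
    (hS : ∀ x ∈ S, ∃ y, φ y = x) :
    (innerPairs q S).card ≤ (innerPairs q (Finset.univ.filter (fun y => φ y ∈ S))).card := by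
  have hlow : ∀ a b : Fin u, a ≤ b → b.val - a.val ≤ (φ b).val - (φ a).val := by
    intro a b
    obtain ⟨b, hb⟩ := b
    induction b with
    | zero => intro h; simp
    | succ k ih =>
      intro h
      rcases Nat.lt_or_ge k a.val with h' | h'
      · have : a.val = k + 1 := by have := Fin.le_def.mp h; simp at this; omega
        simp [this]
      · have := ih (by omega) (Fin.le_def.mpr h')
        have h2 : φ ⟨k, by omega⟩ < φ ⟨k+1, hb⟩ := φ.strictMono (by simp)
        have h3 : φ a ≤ φ ⟨k, by omega⟩ := φ.monotone (Fin.le_def.mpr h')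
        rw [Fin.lt_def] at h2
        rw [Fin.le_def] at h3
        simp only at this ⊢
        omega
  have hval : ∀ a : Fin u, a.val ≤ (φ a).val := by
    intro a
    have := hlow ⟨0, by have := a.isLt; omega⟩ a (by simp [Fin.le_def])
    simp only at this
    omega
  have hval' : ∀ a : Fin u, u - 1 - a.val ≤ n - 1 - (φ a).val := by
    intro a
    have ha := a.isLt
    have := hlow a ⟨u - 1, by omega⟩ (by simp only [Fin.le_def]; omega)
    have h2 := (φ ⟨u - 1, by omega⟩).isLt
    simp only at this
    omega
  have hsub : innerPairs q S ⊆
      (innerPairs q (Finset.univ.filter (fun y => φ y ∈ S))).image (fun z => (φ z.1, φ z.2)) := by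
    rintro ⟨x, y⟩ h
    simp only [innerPairs, Finset.mem_filter, Finset.mem_product] at h
    obtain ⟨⟨hx, hy⟩, h1, h2⟩ := h
    obtain ⟨a, rfl⟩ := hS x hx
    obtain ⟨b, rfl⟩ := hS y hy
    rw [Finset.mem_image]
    refine ⟨(a, b), ?_, rfl⟩
    simp only [innerPairs, Finset.mem_filter, Finset.mem_product, Finset.mem_univ, true_and]
    refine ⟨⟨hx, hy⟩, ?_⟩
    have ha := a.isLt
    have hb := b.isLt
    have ha2 := (φ a).isLt
    have e1 := hval b
    have e2 := hval' a
    rcases lt_trichotomy a b with hab | hab | hab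
    · have e3 := hlow a b hab.le
      have e4 := φ.strictMono hab
      rw [Fin.lt_def] at hab e4
      unfold fdist at *
      split_ifs at * <;> omega
    · subst hab
      simp [fdist] at h1
    · have e4 := φ.strictMono hab
      rw [Fin.lt_def] at hab e4
      unfold fdist at *
      split_ifs at * <;> omega
  exact (Finset.card_le_card hsub).trans Finset.card_image_le

theorem sum_Icc_id_two (q : ℕ) : 2 * ∑ p ∈ Finset.Icc 1 q, p = q * (q + 1) := by
  induction q with
  | zero => simp
  | succ k ih => rw [Finset.sum_Icc_succ_top (by omega), mul_add, ih]; ring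

theorem sum_min_two (q s : ℕ) (h : s ≤ q) :
    2 * ∑ p ∈ Finset.Icc 1 q, min p s + s * s = 2 * q * s + s := by
  induction q, h using Nat.le_induction with
  | base =>
    have : ∑ p ∈ Finset.Icc 1 s, min p s = ∑ p ∈ Finset.Icc 1 s, p :=
      Finset.sum_congr rfl (fun p hp => by rw [Finset.mem_Icc] at hp; omega)
    rw [this, sum_Icc_id_two]; ring
  | succ k hk ih =>
    rw [Finset.sum_Icc_succ_top (by omega), min_eq_right (by omega : s ≤ k + 1)]
    linarith

/-- isoperimetric inequality -/
theorem inner_le (q : ℕ) {n : ℕ} (hn : 2 * q + 1 ≤ n) (S : Finset (Fin n)) :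
    (innerPairs q S).card + ∑ p ∈ Finset.Icc 1 q, min p (min S.card Sᶜ.card) ≤ q * S.card := by
  have hst : S.card + Sᶜ.card = n := by simpa using Finset.card_add_card_compl S
  rcases Nat.le_total S.card q with hs | hs
  · have h1 := inner_small q hn S
    have h2 := sum_min_two q S.card hs
    rw [min_eq_left (by omega : S.card ≤ Sᶜ.card)]
    nlinarith
  rcases Nat.le_total Sᶜ.card q with ht | ht
  · have h1 := inner_small q hn Sᶜ
    have h2 := sum_min_two q Sᶜ.card ht
    have h3 := inner_compl q (by omega) S
    rw [min_eq_right (by omega : Sᶜ.card ≤ S.card)]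
    nlinarith
  have hsum : ∑ p ∈ Finset.Icc 1 q, min p (min S.card Sᶜ.card) = ∑ p ∈ Finset.Icc 1 q, p :=
    Finset.sum_congr rfl (fun p hp => by rw [Finset.mem_Icc] at hp; omega)
  rw [hsum]
  have hg := sum_Icc_id_two q
  rcases Nat.lt_or_ge q S.card with hs' | hs'
  · obtain ⟨T, hT, hTc⟩ := Finset.exists_subset_card_eq ht
    have hdis : Disjoint S T := by
      rw [Finset.disjoint_left]; intro x hx hx'
      exact (Finset.mem_compl.mp (hT hx')) hx
    have hU : (S ∪ T).card = S.card + q := by rw [Finset.card_union_of_disjoint hdis, hTc]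
    let φ := (S ∪ T).orderEmbOfFin hU
    have hrange : ∀ x, x ∈ S ∪ T → ∃ y, φ y = x := by
      intro x hx
      have := Finset.range_orderEmbOfFin (S ∪ T) hU
      have h2 : x ∈ Set.range φ := by rw [this]; exact hx
      exact h2
    have h1 := inner_contract q φ S (fun x hx => hrange x (Finset.mem_union_left _ hx))
    set S' := Finset.univ.filter (fun y => φ y ∈ S) with hS'
    have hS'c : S'.card = S.card := by
      have : S'.image φ = S := by
        ext x
        simp only [hS', Finset.mem_image, Finset.mem_filter, Finset.mem_univ, true_and]
        constructor
        · rintro ⟨a, ha, rfl⟩; exact ha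
        · intro hx
          obtain ⟨y, rfl⟩ := hrange x (Finset.mem_union_left _ hx)
          exact ⟨y, hx, rfl⟩
      have h5 := Finset.card_image_of_injective S' φ.injective
      rw [this] at h5
      exact h5.symm
    have hc : S'.card + S'ᶜ.card = S.card + q := by simpa using Finset.card_add_card_compl S'
    have hS'cc : S'ᶜ.card = q := by omega
    have h2 := inner_compl q (by omega) S'
    have h3 := inner_small q (by omega) S'ᶜ
    rw [hS'c, hS'cc] at h2
    rw [hS'cc] at h3
    nlinarith
  · have hsq : S.card = q := by omega
    have h1 := inner_small q hn S
    rw [hsq] at h1 ⊢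
    nlinarith

/-- intervals attain the bound -/
theorem arc_ge (q : ℕ) {n : ℕ} (hn : 2 * q + 1 ≤ n) (a b : ℕ) (A : Finset (Fin n))
    (hA : ∀ x, x ∈ A ↔ a ≤ x.val ∧ x.val ≤ b) :
    q * A.card ≤ (innerPairs q A).card + ∑ p ∈ Finset.Icc 1 q, min p (min A.card Aᶜ.card) := by
  rw [inner_card q (by omega), ← Finset.sum_add_distrib]
  have : q * A.card = ∑ p ∈ Finset.Icc 1 q, A.card := by simp
  rw [this]
  apply Finset.sum_le_sum
  intro p hp
  rw [Finset.mem_Icc] at hp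
  have h0 := Finset.card_filter_add_card_filter_not (s := A) (fun x => finShift x p ∈ A)
  have h1 : (A.filter (fun x => ¬ finShift x p ∈ A)).card ≤ p := by
    have : ((A.filter (fun x => ¬ finShift x p ∈ A)).image Fin.val).card
        = (A.filter (fun x => ¬ finShift x p ∈ A)).card :=
      Finset.card_image_of_injective _ Fin.val_injective
    rw [← this]
    have hs : (A.filter (fun x => ¬ finShift x p ∈ A)).image Fin.val
        ⊆ Finset.Ico (min b (n-1) + 1 - p) (min b (n-1) + 1) := by
      intro y hy
      simp only [Finset.mem_image, Finset.mem_filter, hA] at hy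
      obtain ⟨x, ⟨hx, hx2⟩, rfl⟩ := hy
      rw [finShift_val x p (by omega)] at hx2
      have := x.isLt
      rw [Finset.mem_Ico]
      split_ifs at hx2 <;> omega
    refine (Finset.card_le_card hs).trans ?_
    rw [Nat.card_Ico]; omega
  have h2 : (A.filter (fun x => ¬ finShift x p ∈ A)).card ≤ Aᶜ.card := by
    apply Finset.card_le_card_of_injOn (fun x => finShift x p)
    · intro x hx
      simp at hx ⊢
      exact hx.2
    · exact (finShift_inj p (by omega)).injOn
  have h3 : (A.filter (fun x => ¬ finShift x p ∈ A)).card ≤ A.card := Finset.card_filter_le _ _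
  omega

/-- decomposition of a Kalmanson matrix into vertex weights and interval weights -/
theorem kalmanson_decomp {n : ℕ} (hn : 3 ≤ n) (D : Fin n → Fin n → ℝ)
    (hsymm : ∀ i j, D i j = D j i) (hK : KalmansonMat D) :
    ∃ (α : Fin n → ℝ) (L : ℕ → ℕ → ℝ), (∀ a b, L a b ≤ 0) ∧
      ∀ u v : Fin n, u ≠ v → D u v = α u + α v +
        ∑ a ∈ Finset.range n, ∑ b ∈ Finset.range (n - 1),
          if (a ≤ u.val ∧ u.val ≤ b) ∧ (a ≤ v.val ∧ v.val ≤ b) then L a b else 0 := by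
  let E : ℕ → ℕ → ℝ := fun x y => if h : x < n ∧ y < n then D ⟨x, h.1⟩ ⟨y, h.2⟩ else 0
  have hE : ∀ u v : Fin n, D u v = E u.val v.val := by
    intro u v; simp [E]
  have hEs : ∀ x y, E x y = E y x := by
    intro x y
    simp only [E]
    by_cases h : x < n ∧ y < n
    · rw [dif_pos h, dif_pos h.symm, hsymm]
    · rw [dif_neg h, dif_neg (fun h' => h h'.symm)]
  have hEK : ∀ i j k l : ℕ, i < j → j < k → k < l → l < n →
      E i j + E k l ≤ E i k + E j l ∧ E i l + E j k ≤ E i k + E j l := by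
    intro i j k l h1 h2 h3 h4
    have := hK ⟨i, by omega⟩ ⟨j, by omega⟩ ⟨k, by omega⟩ ⟨l, h4⟩ h1 h2 h3
    simpa only [hE] using this
  clear_value E
  let κ : ℝ := (E 0 (n-1) + E (n-2) (n-1) - E 0 (n-2)) / 2
  let α : ℕ → ℝ := fun i => if i < n - 1 then E i (n-1) - κ else κ
  let d : ℕ → ℕ → ℝ := fun i j => E i j - α i - α j
  let G : ℕ → ℕ → ℝ := fun a b => if 1 ≤ a ∧ b < n - 1 then d (a-1) b else 0
  let lam : ℕ → ℕ → ℝ := fun a b => (G (a+1) b - G a b) - (G (a+1) (b+1) - G a (b+1))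
  have hα : ∀ i, i < n - 1 → α i = E i (n-1) - κ := fun i hi => if_pos hi
  have hα2 : α (n-1) = κ := if_neg (lt_irrefl _)
  have hG : ∀ a b, b < n - 1 → G (a+1) b = E a b - α a - α b := by
    intro a b hb
    simp [G, d, hb]
  have hG0 : ∀ b, G 0 b = 0 := by intro b; simp [G]
  have hG1 : ∀ a b, n - 1 ≤ b → G a b = 0 := by
    intro a b hb
    simp only [G]
    rw [if_neg (by omega)]
  have hlam : ∀ a b, a < b → b < n - 1 → lam a b ≤ 0 := by
    intro a b hab hb
    simp only [lam]
    rcases Nat.lt_or_ge (b+1) (n-1) with hb' | hb'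
    · rcases a with _ | a
      · rw [hG0, hG0, hG 0 b hb, hG 0 (b+1) hb', hα b hb, hα (b+1) hb']
        have := (hEK 0 b (b+1) (n-1) hab (by omega) (by omega) (by omega)).1
        linarith
      · rw [hG _ _ hb, hG _ _ hb, hG _ _ hb', hG _ _ hb']
        have := (hEK a (a+1) b (b+1) (by omega) (by omega) (by omega) (by omega)).2
        linarith
    · rw [hG1 _ _ hb', hG1 _ _ hb']
      have hbe : b = n - 2 := by omega
      rcases a with _ | a
      · rw [hG0, hG 0 b hb, hα b hb, hα 0 (by omega), hbe]
        simp only [κ]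
        linarith
      · rw [hG _ _ hb, hG _ _ hb, hα a (by omega), hα (a+1) (by omega)]
        have := (hEK a (a+1) b (n-1) (by omega) (by omega) (by omega) (by omega)).2
        linarith
  let L : ℕ → ℕ → ℝ := fun a b => if a < b ∧ b < n - 1 then lam a b else 0
  refine ⟨fun i => α i.val, L, ?_, ?_⟩
  · intro a b
    simp only [L]
    split_ifs with h
    · exact hlam a b h.1 h.2
    · exact le_rfl
  have main : ∀ i j : ℕ, i < j → j < n → E i j = α i + α j +
      ∑ a ∈ Finset.range n, ∑ b ∈ Finset.range (n - 1),
        if a ≤ i ∧ j ≤ b then L a b else 0 := by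
    intro i j hij hj
    have e1 : ∑ a ∈ Finset.range n, ∑ b ∈ Finset.range (n - 1),
        (if a ≤ i ∧ j ≤ b then L a b else 0)
        = ∑ a ∈ Finset.range (i+1), ∑ b ∈ Finset.Ico j (n - 1), lam a b := by
      have s1 : Finset.range (i+1) = (Finset.range n).filter (fun a => a ≤ i) := by
        ext x; simp only [Finset.mem_range, Finset.mem_filter]; omega
      have s2 : Finset.Ico j (n-1) = (Finset.range (n-1)).filter (fun b => j ≤ b) := by
        ext x; simp only [Finset.mem_range, Finset.mem_filter, Finset.mem_Ico]; omega
      rw [s1, Finset.sum_filter]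
      apply Finset.sum_congr rfl
      intro a _
      rw [s2, Finset.sum_filter]
      by_cases ha : a ≤ i
      · rw [if_pos ha]
        apply Finset.sum_congr rfl
        intro b hb
        rw [Finset.mem_range] at hb
        by_cases hb' : j ≤ b
        · rw [if_pos ⟨ha, hb'⟩, if_pos hb']
          simp only [L]
          rw [if_pos ⟨by omega, hb⟩]
        · rw [if_neg (by tauto), if_neg hb']
      · rw [if_neg ha]
        apply Finset.sum_eq_zero
        intro b _
        rw [if_neg (by tauto)]
    have e2 : ∀ a, ∑ b ∈ Finset.Ico j (n - 1), lam a b = G (a+1) j - G a j := by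
      intro a
      have := Finset.sum_Ico_sub (fun b => -(G (a+1) b - G a b)) (by omega : j ≤ n - 1)
      rw [hG1 _ _ le_rfl, hG1 _ _ le_rfl] at this
      have h3 : ∑ b ∈ Finset.Ico j (n - 1), lam a b = ∑ b ∈ Finset.Ico j (n - 1),
          (-(G (a+1) (b+1) - G a (b+1)) - -(G (a+1) b - G a b)) :=
        Finset.sum_congr rfl (fun b _ => by simp only [lam]; ring)
      rw [h3, this]; ring
    rw [e1, Finset.sum_congr rfl (fun a _ => e2 a), Finset.sum_range_sub (fun a => G a j), hG0]
    rcases Nat.lt_or_ge j (n-1) with h | h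
    · rw [hG _ _ h]; ring
    · have : j = n - 1 := by omega
      rw [hG1 _ _ h, this, hα2, hα i (by omega)]; ring
  intro u v huv
  have huv' : u.val ≠ v.val := fun h => huv (Fin.ext h)
  rw [hE]
  rcases Nat.lt_or_gt_of_ne huv' with h | h
  · rw [main _ _ h v.isLt]
    congr 1
    refine Finset.sum_congr rfl (fun a _ => Finset.sum_congr rfl (fun b _ => ?_))
    refine if_congr ?_ rfl rfl
    omega
  · rw [hEs, main _ _ h u.isLt, add_comm (α v.val)]
    congr 1
    refine Finset.sum_congr rfl (fun a _ => Finset.sum_congr rfl (fun b _ => ?_))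
    refine if_congr ?_ rfl rfl
    omega

/-- the interval `[a,b]` pulled back along `π` -/
def pullArc {n : ℕ} (π : Equiv.Perm (Fin n)) (a b : ℕ) : Finset (Fin n) :=
  Finset.univ.filter (fun x => a ≤ (π x).val ∧ (π x).val ≤ b)

theorem mem_pullArc {n : ℕ} (π : Equiv.Perm (Fin n)) (a b : ℕ) (x : Fin n) :
    x ∈ pullArc π a b ↔ a ≤ (π x).val ∧ (π x).val ≤ b := by
  unfold pullArc
  rw [Finset.mem_filter]
  exact ⟨fun h => h.2, fun h => ⟨Finset.mem_univ _, h⟩⟩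

theorem pullArc_card {n : ℕ} (π : Equiv.Perm (Fin n)) (a b : ℕ) :
    (pullArc π a b).card = (pullArc (Equiv.refl (Fin n)) a b).card := by
  apply Finset.card_bijective π π.bijective
  intro x
  simp only [mem_pullArc, Equiv.refl_apply]

theorem inner_pullArc_le (q : ℕ) {n : ℕ} (hn : 2 * q + 1 ≤ n) (π : Equiv.Perm (Fin n))
    (a b : ℕ) : (innerPairs q (pullArc π a b)).card
      ≤ (innerPairs q (pullArc (Equiv.refl (Fin n)) a b)).card := by
  have h1 := inner_le q hn (pullArc π a b)
  have h2 := arc_ge q hn a b (pullArc (Equiv.refl (Fin n)) a b) (by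
    intro x
    simp only [mem_pullArc, Equiv.refl_apply])
  have hc := pullArc_card π a b
  have hc' : (pullArc π a b)ᶜ.card = (pullArc (Equiv.refl (Fin n)) a b)ᶜ.card := by
    rw [Finset.card_compl, Finset.card_compl, hc]
  rw [hc, hc'] at h1
  omega

theorem stripeObj_eq_s19 (q : ℕ) {n : ℕ} (hn : 2 * q + 1 ≤ n) (D : Fin n → Fin n → ℝ)
    (α : Fin n → ℝ) (L : ℕ → ℕ → ℝ)
    (hD : ∀ u v : Fin n, u ≠ v → D u v = α u + α v +
        ∑ a ∈ Finset.range n, ∑ b ∈ Finset.range (n - 1),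
          if (a ≤ u.val ∧ u.val ≤ b) ∧ (a ≤ v.val ∧ v.val ≤ b) then L a b else 0)
    (π : Equiv.Perm (Fin n)) :
    stripeObj q D π = q * (2 * ∑ i, α i) +
      ∑ a ∈ Finset.range n, ∑ b ∈ Finset.range (n - 1),
        ((innerPairs q (pullArc π a b)).card : ℝ) * L a b := by
  have hp : ∀ p ∈ Finset.Icc 1 q, ∑ i : Fin n, D (π i) (π (finShift i p))
      = 2 * ∑ i, α i + ∑ a ∈ Finset.range n, ∑ b ∈ Finset.range (n - 1),
        (((pullArc π a b).filter (fun x => finShift x p ∈ pullArc π a b)).card : ℝ) * L a b := by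
    intro p hp
    rw [Finset.mem_Icc] at hp
    have hne : ∀ i : Fin n, π i ≠ π (finShift i p) := by
      intro i h
      have h1 := congrArg Fin.val (π.injective h)
      rw [finShift_val i p (by omega)] at h1
      have := i.isLt
      split_ifs at h1 <;> omega
    rw [Finset.sum_congr rfl (fun i _ => hD _ _ (hne i)), Finset.sum_add_distrib,
      Finset.sum_add_distrib]
    have s1 : ∑ i, α (π i) = ∑ i, α i := Equiv.sum_comp π α
    have s2 : ∑ i, α (π (finShift i p)) = ∑ i, α i := by
      rw [← s1]
      exact (finShift_bij p (by omega)).sum_comp (fun i => α (π i))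
    rw [s1, s2, ← two_mul]
    congr 1
    rw [Finset.sum_comm]
    refine Finset.sum_congr rfl (fun a _ => ?_)
    rw [Finset.sum_comm]
    refine Finset.sum_congr rfl (fun b _ => ?_)
    rw [← Finset.sum_filter, Finset.sum_const, nsmul_eq_mul]
    congr 3
    ext x
    simp [mem_pullArc]
  unfold stripeObj
  rw [Finset.sum_congr rfl hp, Finset.sum_add_distrib]
  congr 1
  · simp
  · rw [Finset.sum_comm]
    refine Finset.sum_congr rfl (fun a _ => ?_)
    rw [Finset.sum_comm]
    refine Finset.sum_congr rfl (fun b _ => ?_)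
    rw [inner_card q (by omega), Nat.cast_sum, Finset.sum_mul]

/-- Theorem (Deineko & Woeginger): for `q ≥ 1` and a symmetric `n×n` Kalmanson matrix
with `n ≥ 2q+1`, the identity permutation minimizes the `q`-stripe TSP objective. -/
theorem qStripe_kalmanson_identity_optimal (q n : ℕ) (hq : 1 ≤ q) (hn : 2*q+1 ≤ n)
    (D : Fin n → Fin n → ℝ) (hsymm : ∀ i j, D i j = D j i) (hK : KalmansonMat D)
    (π : Equiv.Perm (Fin n)) :
    stripeObj q D (Equiv.refl (Fin n)) ≤ stripeObj q D π := by
  obtain ⟨α, L, hL, hD⟩ := kalmanson_decomp (by omega) D hsymm hK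
  rw [stripeObj_eq_s19 q hn D α L hD, stripeObj_eq_s19 q hn D α L hD]
  refine add_le_add le_rfl (Finset.sum_le_sum fun a _ => Finset.sum_le_sum fun b _ => ?_)
  exact mul_le_mul_of_nonpos_right (by exact_mod_cast inner_pullArc_le q hn π a b) (hL a b)
end
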